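/- arXiv:1407.1939 — 8 statements merged into one kernel-verified Lean document; each statement's English description precedes it below -/
import Mathlib

section
/- (Ky Fan existence theorem, Theorem 3.1.) Let K be a nonempty compact convex subset of ℝⁿ and let ψ : K×K → ℝ satisfy conditions (L1)–(L3). Then the solution set S(ψ,K) is nonempty, i.e., there exists u ∈ K such that ψ(u,y) ≥ 0 for all y ∈ K. -/
/-!
If no point of `K` solves the equilibrium problem, then for every `x ∈ K` the set
`t x = {y ∈ K | ψ x y < 0}` is nonempty, it is convex by (L3), and by (L2) each of its points stays
in `t x'` for `x' ∈ K` close to `x`. A smooth partition of unity therefore gives a smooth map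
`p : ℝⁿ → K` with `p x ∈ t x` for every `x ∈ K`. A fixed point `x` of `p` lies in `K` and satisfies
`ψ x x < 0`, which contradicts (L1).

The fixed point comes from Brouwer's theorem for smooth maps into a ball
(`exists_fixedPoint_of_contDiff`), which is proved analytically in the manner of Milnor and Rogers.
If `p` has no fixed point, then moving `x` away from `p x` along a line until the sphere is reached
is a `C¹` retraction `x ↦ x + h x` of the closed ball onto the sphere. No such retraction exists
(`no_smooth_retraction`): extend `h` by zero to a Lipschitz map `g` on the whole space. For small
`t > 0` the map `x ↦ x + t • g x` is a bijection of the space fixing the complement of the open ball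
`U`, so by change of variables `∫_U det (1 + t • h') = vol U`. The left side is a polynomial in `t`,
hence the identity persists at `t = 1`. There the integrand vanishes, because a map into the sphere
has singular derivative, and so `vol U = 0`, which is absurd. The passage from small `t` to `t = 1`
is made pointwise by Lagrange interpolation (`exists_det_one_add_eq_sum`).
-/

open scoped RealInnerProductSpace

section Brouwer

open MeasureTheory Metric Set
open scoped NNReal

variable {E : Type*} [NormedAddCommGroup E] [InnerProductSpace ℝ E] [FiniteDimensional ℝ E]

/-- Since `t ↦ det (1 + t • A)` is a polynomial of degree at most `dim E`, its value at `1` is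
obtained from its values at `dim E + 1` distinct nodes `v i`, with Lagrange coefficients that do not
depend on `A`. -/
theorem exists_det_one_add_eq_sum (v : Fin (Module.finrank ℝ E + 1) → ℝ)
    (hv : Function.Injective v) :
    ∃ c : Fin (Module.finrank ℝ E + 1) → ℝ,
      ∀ A : E →L[ℝ] E, (1 + A).det = ∑ i, c i * (1 + v i • A).det := by
  classical
  refine ⟨fun i => (Lagrange.basis Finset.univ v i).eval 1, fun A => ?_⟩
  let b := Module.finBasis ℝ E
  let M := LinearMap.toMatrix b b (A : E →ₗ[ℝ] E)
  let P : Polynomial ℝ := Matrix.det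
    ((Polynomial.X : Polynomial ℝ) • M.map Polynomial.C + (1 : Matrix _ _ ℝ).map Polynomial.C)
  have hP : ∀ t : ℝ, P.eval t = (1 + t • A).det := by
    intro t
    have h1 : P.eval t = (t • M + 1).det := by
      simp only [P]
      rw [← Polynomial.coe_evalRingHom, RingHom.map_det]
      congr 1
      ext i j
      rcases eq_or_ne i j with rfl | hij
      · simp [mul_comm t]
      · simp [hij, mul_comm t]
    rw [h1, ContinuousLinearMap.det, ← LinearMap.det_toMatrix b]
    have h2 : ((1 + t • A : E →L[ℝ] E) : E →ₗ[ℝ] E) = t • (A : E →ₗ[ℝ] E) + 1 := by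
      ext x; simp [add_comm]
    rw [h2, map_add, map_smul, LinearMap.toMatrix_one]
  have hdeg : P.degree < (Finset.univ : Finset (Fin (Module.finrank ℝ E + 1))).card := by
    refine lt_of_le_of_lt Polynomial.degree_le_natDegree ?_
    have := Polynomial.natDegree_det_X_add_C_le M (1 : Matrix _ _ ℝ)
    simp only [Finset.card_univ, Fintype.card_fin] at this ⊢
    exact_mod_cast Nat.lt_succ_of_le this
  have h := congrArg (Polynomial.eval 1) (Lagrange.eq_interpolate (v := v) hv.injOn hdeg)
  rw [hP, one_smul, Lagrange.interpolate_apply, Polynomial.eval_finsetSum] at h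
  simpa [hP, mul_comm] using h

/-- A perturbation of the identity by a strict contraction is a bijection. -/
theorem bijective_add_smul_of_lipschitz {g : E → E} {L : ℝ≥0} (hg : LipschitzWith L g)
    {t : ℝ} (ht : ‖t‖₊ * L < 1) : Function.Bijective fun x => x + t • g x := by
  have happ : ApproximatesLinearOn (fun x => x + t • g x)
      ((ContinuousLinearEquiv.refl ℝ E : E ≃L[ℝ] E) : E →L[ℝ] E) univ (‖t‖₊ * L) := by
    intro x _ y _
    have := hg.norm_sub_le x y
    calc _ = ‖t • (g x - g y)‖ := by congr 1; simp [smul_sub]; abel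
      _ ≤ _ := by
        rw [norm_smul]; push_cast; rw [mul_assoc]; gcongr
  have hc : Subsingleton E ∨ ‖t‖₊ * L <
      ‖((ContinuousLinearEquiv.refl ℝ E).symm : E →L[ℝ] E)‖₊⁻¹ := by
    rcases subsingleton_or_nontrivial E with h | h
    · exact Or.inl h
    · right
      have : ‖((ContinuousLinearEquiv.refl ℝ E).symm : E →L[ℝ] E)‖₊ = 1 :=
        NNReal.eq ContinuousLinearMap.norm_id
      rwa [this, inv_one]
  exact (happ.toHomeomorph _ hc).bijective

/-- A `C¹` map on a closed ball which vanishes on the bounding sphere remains Lipschitz when it is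
extended by zero. -/
theorem exists_lipschitz_extension {h : E → E} {R : ℝ} (hR : 0 < R)
    (hd : ∀ x ∈ closedBall (0 : E) R, ContDiffAt ℝ 1 h x)
    (hs : ∀ x, ‖x‖ = R → h x = 0) :
    ∃ (g : E → E) (L : ℝ≥0), LipschitzWith L g ∧ (∀ x ∈ ball (0 : E) R, g x = h x) ∧
      ∀ x ∉ ball (0 : E) R, g x = 0 := by
  classical
  obtain ⟨L, hL⟩ := ContDiffOn.exists_lipschitzOnWith (s := closedBall (0 : E) R) (f := h) (n := 1)
    (fun x hx => (hd x hx).contDiffWithinAt) (by simp) (convex_closedBall _ _)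
    (isCompact_closedBall _ _)
  let g : E → E := fun x => if x ∈ ball (0 : E) R then h x else 0
  -- `h x` is compared with the value `0` of `h` at the radial projection of `y` onto the sphere.
  have key : ∀ x ∈ ball (0 : E) R, ∀ y ∉ ball (0 : E) R, ‖h x‖ ≤ 2 * L * ‖x - y‖ := by
    intro x hx y hy
    simp only [mem_ball_zero_iff, not_lt] at hx hy
    have hy0 : 0 < ‖y‖ := hR.trans_le hy
    have hz : ‖(R / ‖y‖) • y‖ = R := by
      rw [norm_smul, Real.norm_of_nonneg (by positivity)]; field_simp
    have h1 := hL.norm_sub_le (x := x) (by simpa using hx.le) (y := (R / ‖y‖) • y)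
      (by simpa using hz.le)
    rw [hs _ hz, sub_zero] at h1
    have h2 : ‖y - (R / ‖y‖) • y‖ = ‖y‖ - R := by
      have : y - (R / ‖y‖) • y = (1 - R / ‖y‖) • y := by simp [sub_smul]
      rw [this, norm_smul, Real.norm_of_nonneg (by rw [sub_nonneg, div_le_one hy0]; exact hy)]
      field_simp
    have h3 := norm_sub_le_norm_sub_add_norm_sub x y ((R / ‖y‖) • y)
    have h4 := norm_sub_norm_le y x
    rw [norm_sub_rev] at h4
    calc ‖h x‖ ≤ L * ‖x - (R / ‖y‖) • y‖ := h1
      _ ≤ L * (2 * ‖x - y‖) := by gcongr; linarith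
      _ = _ := by ring
  refine ⟨g, 2 * L, LipschitzWith.of_dist_le_mul fun x y => ?_, fun x hx => if_pos hx,
    fun x hx => if_neg hx⟩
  rw [dist_eq_norm, dist_eq_norm]
  push_cast
  by_cases hx : x ∈ ball (0 : E) R <;> by_cases hy : y ∈ ball (0 : E) R
  · simp only [g, if_pos hx, if_pos hy]
    have := hL.norm_sub_le (ball_subset_closedBall hx) (ball_subset_closedBall hy)
    have h0 : 0 ≤ L * ‖x - y‖ := by positivity
    linarith
  · simpa only [g, if_pos hx, if_neg hy, sub_zero] using key x hx y hy
  · simp only [g, if_neg hx, if_pos hy, zero_sub, norm_neg]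
    rw [norm_sub_rev]; exact key y hy x hx
  · simp only [g, if_neg hx, if_neg hy, sub_self, norm_zero]; positivity

/-- A map into a sphere of positive radius has singular derivative: differentiating `‖r y‖ ^ 2 = R ^ 2`
shows that the range of `r'` is orthogonal to `r x ≠ 0`. -/
theorem det_fderiv_eq_zero_of_norm_eq {r : E → E} {r' : E →L[ℝ] E} {x : E} {R : ℝ} (hR : 0 < R)
    (hr : HasFDerivAt r r' x) (hn : ∀ᶠ y in nhds x, ‖r y‖ = R) : r'.det = 0 := by
  by_contra hdet
  have hu : IsUnit (r' : E →ₗ[ℝ] E) := by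
    rw [LinearMap.isUnit_iff_isUnit_det]; exact isUnit_iff_ne_zero.mpr hdet
  obtain ⟨v, hv⟩ := ((Module.End.isUnit_iff _).mp hu).surjective (r x)
  have h1 := hr.norm_sq
  have h2 : HasFDerivAt (fun y => ‖r y‖ ^ 2) (0 : E →L[ℝ] ℝ) x :=
    (hasFDerivAt_const (R ^ 2) x).congr_of_eventuallyEq (hn.mono fun y hy => by simp [hy])
  have h3 := congrArg (fun T : E →L[ℝ] ℝ => T v) (h1.unique h2)
  have hv' : r' v = r x := hv
  simp [hv', hn.self_of_nhds] at h3
  exact hR.ne' h3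

/-- There is no `C¹` retraction of a closed ball onto its bounding sphere. The retraction is written
as `x ↦ x + h x`. -/
theorem no_smooth_retraction {h : E → E} {R : ℝ} (hR : 0 < R)
    (hd : ∀ x ∈ closedBall (0 : E) R, ContDiffAt ℝ 1 h x)
    (hs : ∀ x, ‖x‖ = R → h x = 0)
    (hn : ∀ x ∈ closedBall (0 : E) R, ‖x + h x‖ = R) : False := by
  borelize E
  obtain ⟨g, L, hL, hgin, hgout⟩ := exists_lipschitz_extension hR hd hs
  set U := ball (0 : E) R with hU
  have hgd : ∀ x ∈ U, HasFDerivAt g (fderiv ℝ h x) x := fun x hx =>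
    ((hd x (ball_subset_closedBall hx)).differentiableAt (by simp)).hasFDerivAt.congr_of_eventuallyEq
      (Filter.eventuallyEq_of_mem (isOpen_ball.mem_nhds hx) hgin)
  have hbound : ∀ x ∈ U, ‖fderiv ℝ h x‖ ≤ L := fun x hx =>
    (hgd x hx).le_of_lipschitz hL
  obtain ⟨δ, hδ, hδdet⟩ : ∃ δ > 0, ∀ B : E →L[ℝ] E, ‖B - 1‖ < δ → 0 < B.det := by
    have h1 : (1 : E →L[ℝ] E).det = 1 := by
      simp [ContinuousLinearMap.det]
    have := (ContinuousLinearMap.continuous_det (𝕜 := ℝ) (E := E)).continuousAt.eventually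
      (lt_mem_nhds (show (0 : ℝ) < (1 : E →L[ℝ] E).det by rw [h1]; exact one_pos))
    obtain ⟨δ, hδ, H⟩ := Metric.eventually_nhds_iff.mp this
    exact ⟨δ, hδ, fun B hB => H (by rwa [dist_eq_norm])⟩
  set ε : ℝ := min δ 1 / (L + 1) with hε
  have hL1 : (0 : ℝ) < L + 1 := by positivity
  have hε0 : 0 < ε := by positivity
  have hsmall : ∀ t, 0 < t → t ≤ ε → t * L < min δ 1 := by
    intro t ht hte
    calc t * L < t * (L + 1) := by gcongr; linarith
      _ ≤ ε * (L + 1) := by gcongr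
      _ = _ := by rw [hε]; field_simp
  have hvol : ∀ t, 0 < t → t ≤ ε →
      IntegrableOn (fun x => (1 + t • fderiv ℝ h x).det) U ∧
        ∫ x in U, (1 + t • fderiv ℝ h x).det = volume.real U := by
    intro t ht hte
    have hts := hsmall t ht hte
    have hbij := bijective_add_smul_of_lipschitz hL (t := t) (by
      rw [← NNReal.coe_lt_coe]; push_cast
      rw [Real.norm_of_nonneg ht.le]; exact hts.trans_le (min_le_right _ _))
    -- The map is a bijection which is the identity off `U`, so it maps `U` onto itself.
    have himg : (fun x => x + t • g x) '' U = U := by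
      have hc : (fun x => x + t • g x) '' Uᶜ = Uᶜ := by
        rw [image_congr (g := id) fun x hx => by simp [hgout x hx], image_id]
      rw [← compl_inj_iff, ← image_compl_eq hbij, hc]
    have hder : ∀ x ∈ U, HasFDerivWithinAt (fun x => x + t • g x) (1 + t • fderiv ℝ h x) U x :=
      fun x hx => ((hasFDerivAt_id x).add ((hgd x hx).const_smul t)).hasFDerivWithinAt
    have habs : ∀ x ∈ U, |(1 + t • fderiv ℝ h x).det| • (1 : ℝ) = (1 + t • fderiv ℝ h x).det := by
      intro x hx
      have : 0 < (1 + t • fderiv ℝ h x).det := hδdet _ (by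
        rw [add_sub_cancel_left, norm_smul, Real.norm_of_nonneg ht.le]
        calc t * ‖fderiv ℝ h x‖ ≤ t * L := by gcongr; exact hbound x hx
          _ < _ := hts.trans_le (min_le_left _ _))
      rw [abs_of_pos this, smul_eq_mul, mul_one]
    have hm : MeasurableSet U := measurableSet_ball
    constructor
    · have := (integrableOn_image_iff_integrableOn_abs_det_fderiv_smul volume hm hder
        hbij.injective.injOn (fun _ => (1 : ℝ))).mp (by
          rw [himg]; exact integrableOn_const measure_ball_lt_top.ne)
      exact this.congr_fun habs hm
    · have := integral_image_eq_integral_abs_det_fderiv_smul volume hm hder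
        hbij.injective.injOn (fun _ => (1 : ℝ))
      rw [himg, setIntegral_congr_fun hm habs] at this
      rw [← this]; simp
  let v : Fin (Module.finrank ℝ E + 1) → ℝ := fun i => ε / (i + 1)
  have hv : Function.Injective v := by
    intro i j hij
    simp only [v] at hij
    rw [div_eq_div_iff (by positivity) (by positivity)] at hij
    have := add_right_cancel (mul_left_cancel₀ hε0.ne' hij)
    exact Fin.ext (by exact_mod_cast this.symm)
  have hv0 : ∀ i, 0 < v i := fun i => by positivity
  have hvε : ∀ i, v i ≤ ε := fun i => div_le_self hε0.le (by simp)
  obtain ⟨c, hc⟩ := exists_det_one_add_eq_sum (E := E) v hv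
  have hsum : ∑ i, c i = 1 := by
    have := hc 0
    simp [ContinuousLinearMap.det] at this
    exact this.symm
  have hzero : ∀ x ∈ U, (1 + fderiv ℝ h x).det = 0 := fun x hx =>
    det_fderiv_eq_zero_of_norm_eq hR ((hasFDerivAt_id x).add
      ((hd x (ball_subset_closedBall hx)).differentiableAt (by simp)).hasFDerivAt)
      (Filter.eventually_of_mem (isOpen_ball.mem_nhds hx)
        fun y hy => hn y (ball_subset_closedBall hy))
  have h0 : (0 : ℝ) = volume.real U := by
    calc (0 : ℝ) = ∫ x in U, (1 + fderiv ℝ h x).det :=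
          (setIntegral_eq_zero_of_forall_eq_zero hzero).symm
      _ = ∫ x in U, ∑ i, c i * (1 + v i • fderiv ℝ h x).det :=
          integral_congr_ae (.of_forall fun x => hc _)
      _ = ∑ i, c i * ∫ x in U, (1 + v i • fderiv ℝ h x).det := by
          rw [integral_finsetSum _ fun i _ => ((hvol _ (hv0 i) (hvε i)).1.const_mul _)]
          simp_rw [integral_const_mul]
      _ = volume.real U := by
          simp_rw [fun i => (hvol _ (hv0 i) (hvε i)).2]
          rw [← Finset.sum_mul, hsum, one_mul]
  have hpos : 0 < volume.real U :=
    ENNReal.toReal_pos (measure_ball_pos _ _ hR).ne' measure_ball_lt_top.ne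
  exact hpos.ne h0

/-- **Brouwer's fixed point theorem** for `C¹` maps into a ball. -/
theorem exists_fixedPoint_of_contDiff {p : E → E} {R : ℝ} (hR : 0 < R)
    (hp : ContDiff ℝ 1 p) (hpR : ∀ x, ‖p x‖ < R) : ∃ x, p x = x := by
  by_contra! hne
  let u : E → E := fun x => x - p x
  have hu0 : ∀ x, 0 < ‖u x‖ ^ 2 := fun x => by
    have : u x ≠ 0 := sub_ne_zero.mpr (hne x).symm
    positivity
  -- `l x` is the larger root of the quadratic equation `‖x + l • u x‖ ^ 2 = R ^ 2` and `D x` is a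
  -- quarter of its discriminant. Since `D` is positive on the closed ball, the root is smooth there.
  let D : E → ℝ := fun x => ⟪x, u x⟫ ^ 2 + ‖u x‖ ^ 2 * (R ^ 2 - ‖x‖ ^ 2)
  let l : E → ℝ := fun x => (-⟪x, u x⟫ + √(D x)) / ‖u x‖ ^ 2
  have hinner : ∀ x, ‖x‖ = R → 0 < ⟪x, u x⟫ := by
    intro x hx
    have h1 : ⟪x, p x⟫ ≤ ‖x‖ * ‖p x‖ := real_inner_le_norm _ _
    have h2 : ‖x‖ * ‖p x‖ < R * R := by rw [hx]; exact mul_lt_mul_of_pos_left (hpR x) hR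
    simp only [u, inner_sub_right, real_inner_self_eq_norm_mul_norm, hx] at *
    linarith
  have hD : ∀ x ∈ closedBall (0 : E) R, 0 < D x := by
    intro x hx
    rw [mem_closedBall_zero_iff] at hx
    rcases hx.lt_or_eq with hx | hx
    · have : 0 < R ^ 2 - ‖x‖ ^ 2 := by nlinarith [norm_nonneg x]
      have := mul_pos (hu0 x) this
      simp only [D]; positivity
    · have := hinner x hx
      simp only [D, hx, sub_self, mul_zero, add_zero]; positivity
  have hucd : ContDiff ℝ 1 u := contDiff_id.sub hp
  have hDcd : ContDiff ℝ 1 D :=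
    ((contDiff_id.inner ℝ hucd).pow 2).add
      ((hucd.norm_sq ℝ).mul (contDiff_const.sub (contDiff_id.norm_sq ℝ)))
  refine no_smooth_retraction (h := fun x => l x • u x) hR (fun x hx => ?_) (fun x hx => ?_)
    (fun x hx => ?_)
  · exact (((contDiff_id.inner ℝ hucd).neg.contDiffAt.add
      (hDcd.contDiffAt.sqrt (hD x hx).ne')).div (hucd.norm_sq ℝ).contDiffAt (hu0 x).ne').smul
      hucd.contDiffAt
  · have : l x = 0 := by
      simp only [l, D, hx, sub_self, mul_zero, add_zero, Real.sqrt_sq (hinner x hx).le,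
        neg_add_cancel, zero_div]
    simp [this]
  · have hsq : ‖x + l x • u x‖ ^ 2 = R ^ 2 := by
      rw [norm_add_sq_real, norm_smul, inner_smul_right, mul_pow, Real.norm_eq_abs, sq_abs]
      have hl : l x * ‖u x‖ ^ 2 = -⟪x, u x⟫ + √(D x) := div_mul_cancel₀ _ (hu0 x).ne'
      have hs : √(D x) ^ 2 = ⟪x, u x⟫ ^ 2 + ‖u x‖ ^ 2 * (R ^ 2 - ‖x‖ ^ 2) :=
        Real.sq_sqrt (hD x hx).le
      refine mul_left_cancel₀ (hu0 x).ne' ?_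
      linear_combination (l x * ‖u x‖ ^ 2 + √(D x) + ⟪x, u x⟫) * hl + hs
    exact (sq_eq_sq₀ (norm_nonneg _) hR.le).mp hsq

end Brouwer

/-- Ky Fan existence theorem (Theorem 3.1): if `K` is a nonempty compact convex subset of
`ℝⁿ` and `ψ` satisfies (L1)–(L3), then the equilibrium problem has a solution. -/
theorem ky_fan_existence (n : ℕ)
    (K : Set (EuclideanSpace ℝ (Fin n))) (hKne : K.Nonempty)
    (hKcomp : IsCompact K) (hKconv : Convex ℝ K)
    (ψ : EuclideanSpace ℝ (Fin n) → EuclideanSpace ℝ (Fin n) → ℝ)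
    (hL1 : ∀ x ∈ K, ψ x x = 0)
    (hL2 : ∀ y ∈ K, UpperSemicontinuousOn (fun x => ψ x y) K)
    (hL3conv : ∀ x ∈ K, ConvexOn ℝ K (ψ x))
    (hL3lsc : ∀ x ∈ K, LowerSemicontinuousOn (ψ x) K) :
    ∃ u ∈ K, ∀ y ∈ K, 0 ≤ ψ u y := by
  by_contra! hcon
  let t : EuclideanSpace ℝ (Fin n) → Set (EuclideanSpace ℝ (Fin n)) :=
    fun x => {y | y ∈ K ∧ (x ∈ K → ψ x y < 0)}
  have ht : ∀ x, Convex ℝ (t x) := by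
    intro x
    by_cases hx : x ∈ K
    · simpa [t, hx] using (hL3conv x hx).convex_lt 0
    · simpa [t, hx] using hKconv
  have hloc : ∀ x, ∃ c, ∀ᶠ y in nhds x, c ∈ t y := by
    intro x
    by_cases hx : x ∈ K
    · obtain ⟨c, hcK, hc⟩ := hcon x hx
      refine ⟨c, ?_⟩
      have := hL2 c hcK x hx 0 hc
      rw [eventually_nhdsWithin_iff] at this
      exact this.mono fun y hy => ⟨hcK, hy⟩
    · obtain ⟨c, hcK⟩ := hKne
      exact ⟨c, Filter.Eventually.mono (hKcomp.isClosed.isOpen_compl.mem_nhds hx)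
        fun y hy => ⟨hcK, fun h => absurd h hy⟩⟩
  -- Since `t x ⊆ K` also for `x ∉ K`, the smooth selection `p` maps the whole space into `K`.
  obtain ⟨p, hp⟩ := exists_contMDiffMap_forall_mem_convex_of_local_const (n := 1)
    (modelWithCornersSelf ℝ (EuclideanSpace ℝ (Fin n))) ht hloc
  obtain ⟨R, hR, hKR⟩ := hKcomp.isBounded.subset_ball_lt 0 0
  obtain ⟨x, hx⟩ := exists_fixedPoint_of_contDiff hR p.contMDiff.contDiff
    fun x => mem_ball_zero_iff.mp (hKR (hp x).1)
  have hxt := hp x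
  rw [hx] at hxt
  exact (hxt.2 hxt.1).ne (hL1 x hxt.1)
end

section
/- (Theorem 3.2.) Let K be a nonempty closed convex subset of ℝⁿ and let ψ : K×K → ℝ satisfy conditions (L1)–(L5). Then the solution set S(ψ,K) is nonempty, i.e., there exists u ∈ K such that ψ(u,y) ≥ 0 for all y ∈ K. -/
open scoped RealInnerProductSpace
open Filter

/-!
By monotonicity (L4) no fixed-point or KKM argument is needed. On a compact convex set `C`, the
sets `{u ∈ C | ψ(y,u) ≤ 0}` have the finite intersection property: for `y₁, …, y_k`, Sion's minimax
theorem gives a saddle point of `(u, w) ↦ ∑ wᵢ ψ(yᵢ,u)` on `C × Δ`, whose value is nonpositive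
because at `u = ∑ wⱼ yⱼ` convexity bounds the sum by `∑ wᵢ wⱼ ψ(yᵢ,yⱼ)`, and symmetrizing this
double sum shows, by (L4), that it is `≤ 0` (`exists_forall_finite_nonpos`). Compactness then gives
`u` with `ψ(y,u) ≤ 0` for every `y ∈ C`, and convexity together with upper semicontinuity along
segments turns such a `u` into a solution (`minty`, `exists_solution_of_isCompact`).

For unbounded `K`, solve the problem on the truncations `K ∩ closedBall 0 r`. A truncated solution
`u` solves the full problem as soon as `ψ(u,w) ≤ 0` for some `w ∈ K` with `‖w‖ < r`
(`solution_of_truncated`). Either some truncated solution is interior to its ball, and `w = u` works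
by (L1), or the truncated solutions tend to infinity in norm and (L5) provides `w`.
-/

section Equilibrium

variable {E : Type*} [NormedAddCommGroup E] [NormedSpace ℝ E]

/-- Monotonicity makes the quadratic form of the matrix `ψ(yᵢ,yⱼ)` nonpositive on nonnegative
weights, so by convexity the weighted values at the barycenter have nonpositive mean. -/
lemma sum_mul_barycenter_nonpos {C : Set E} {ψ : E → E → ℝ}
    (hconv : ∀ x ∈ C, ConvexOn ℝ C (ψ x))
    (hmono : ∀ x ∈ C, ∀ y ∈ C, ψ x y + ψ y x ≤ 0)
    {ι : Type*} [Fintype ι] (y : ι → E) (hy : ∀ i, y i ∈ C)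
    {w : ι → ℝ} (hw : w ∈ stdSimplex ℝ ι) :
    ∑ i, w i * ψ (y i) (∑ j, w j • y j) ≤ 0 := by
  have hw0 : ∀ i, 0 ≤ w i := hw.1
  have h1 : ∑ i, w i * ψ (y i) (∑ j, w j • y j) ≤ ∑ i, ∑ j, w i * w j * ψ (y i) (y j) := by
    refine Finset.sum_le_sum fun i _ => ?_
    have := (hconv _ (hy i)).map_sum_le (t := Finset.univ) (w := w) (p := y)
      (fun j _ => hw0 j) hw.2 (fun j _ => hy j)
    calc w i * ψ (y i) (∑ j, w j • y j) ≤ w i * ∑ j, w j • ψ (y i) (y j) :=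
          mul_le_mul_of_nonneg_left this (hw0 i)
      _ = _ := by simp [Finset.mul_sum, mul_assoc]
  have h2 : ∑ i, ∑ j, w i * w j * ψ (y i) (y j) = ∑ i, ∑ j, w i * w j * ψ (y j) (y i) := by
    rw [Finset.sum_comm]
    exact Finset.sum_congr rfl fun i _ => Finset.sum_congr rfl fun j _ => by ring
  have h3 : ∑ i, ∑ j, w i * w j * ψ (y i) (y j) + ∑ i, ∑ j, w i * w j * ψ (y j) (y i) ≤ 0 := by
    simp only [← Finset.sum_add_distrib, ← mul_add]
    exact Finset.sum_nonpos fun i _ => Finset.sum_nonpos fun j _ =>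
      mul_nonpos_of_nonneg_of_nonpos (mul_nonneg (hw0 i) (hw0 j)) (hmono _ (hy i) _ (hy j))
  linarith

lemma exists_forall_finite_nonpos {C : Set E} (hne : C.Nonempty) (hC : IsCompact C)
    (hCconv : Convex ℝ C) {ψ : E → E → ℝ}
    (hconv : ∀ x ∈ C, ConvexOn ℝ C (ψ x))
    (hlsc : ∀ x ∈ C, LowerSemicontinuousOn (ψ x) C)
    (hmono : ∀ x ∈ C, ∀ y ∈ C, ψ x y + ψ y x ≤ 0)
    {ι : Type*} [Finite ι] (y : ι → E) (hy : ∀ i, y i ∈ C) :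
    ∃ u ∈ C, ∀ i, ψ (y i) u ≤ 0 := by
  classical
  have := Fintype.ofFinite ι
  rcases isEmpty_or_nonempty ι with h | ⟨⟨i₀⟩⟩
  · obtain ⟨u, hu⟩ := hne
    exact ⟨u, hu, fun i => (h.false i).elim⟩
  have hlin : ∀ u, IsLinearMap ℝ fun w : ι → ℝ => ∑ i, w i * ψ (y i) u := fun u =>
    ⟨fun a b => by simp [add_mul, Finset.sum_add_distrib],
      fun c a => by simp [Finset.mul_sum, mul_assoc]⟩
  have hcx : ∀ w ∈ stdSimplex ℝ ι, ConvexOn ℝ C fun u => ∑ i, w i * ψ (y i) u := by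
    intro w hw
    refine ⟨hCconv, fun a ha b hb s t hs ht hst => ?_⟩
    simp only [smul_eq_mul, Finset.mul_sum, ← Finset.sum_add_distrib]
    refine Finset.sum_le_sum fun i _ => ?_
    have h1 := (hconv _ (hy i)).2 ha hb hs ht hst
    have h2 := mul_le_mul_of_nonneg_left h1 (hw.1 i)
    simp only [smul_eq_mul] at h2
    linarith
  obtain ⟨u, hu, w, hw, hsad⟩ := Sion.exists_isSaddlePointOn (X := C) (Y := stdSimplex ℝ ι)
    (f := fun u w => ∑ i, w i * ψ (y i) u) hne hCconv hC
    (fun w hw => lowerSemicontinuousOn_sum fun i _ =>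
      ((continuous_const_mul (w i)).comp_lowerSemicontinuousOn (hlsc _ (hy i))
        (monotone_mul_left_of_nonneg (hw.1 i))))
    (fun w hw => (hcx w hw).quasiconvexOn)
    (convex_stdSimplex ℝ ι) ⟨_, single_mem_stdSimplex ℝ i₀⟩ (isCompact_stdSimplex ℝ ι)
    (fun u _ => (by fun_prop : Continuous fun w : ι → ℝ =>
      ∑ i, w i * ψ (y i) u).upperSemicontinuous.upperSemicontinuousOn _)
    (fun u _ => ((hlin u).mk' _).concaveOn (convex_stdSimplex ℝ ι) |>.quasiconcaveOn)
  refine ⟨u, hu, fun i => ?_⟩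
  have h := hsad (∑ j, w j • y j)
    (hCconv.sum_mem (fun j _ => hw.1 j) hw.2 fun j _ => hy j) _ (single_mem_stdSimplex ℝ i)
  have hb := sum_mul_barycenter_nonpos hconv hmono y hy hw
  simp only [Pi.single_apply, ite_mul, one_mul, zero_mul, Finset.sum_ite_eq',
    Finset.mem_univ, if_true] at h
  exact h.trans hb

/-- Minty's lemma: a solution of the dual problem `ψ(y,u) ≤ 0` for all `y` solves the equilibrium
problem. -/
lemma minty {C : Set E} (hCconv : Convex ℝ C) {ψ : E → E → ℝ}
    (hdiag : ∀ x ∈ C, ψ x x = 0)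
    (husc : ∀ y ∈ C, UpperSemicontinuousOn (fun x => ψ x y) C)
    (hconv : ∀ x ∈ C, ConvexOn ℝ C (ψ x))
    {u : E} (hu : u ∈ C) (hdual : ∀ y ∈ C, ψ y u ≤ 0) :
    ∀ y ∈ C, 0 ≤ ψ u y := by
  intro y hy
  by_contra! hneg
  have hmem : ∀ t ∈ Set.Ioo (0 : ℝ) 1, (1 - t) • u + t • y ∈ C := fun t ht =>
    hCconv hu hy (by linarith [ht.2]) ht.1.le (by ring)
  -- On the open segment `0 = ψ(z,z) ≤ (1 - t) ψ(z,u) + t ψ(z,y)` forces `ψ(z,y) ≥ 0`.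
  have hpos : ∀ t ∈ Set.Ioo (0 : ℝ) 1, 0 ≤ ψ ((1 - t) • u + t • y) y := by
    intro t ht
    have hz := hmem t ht
    have h := (hconv _ hz).2 hu hy (by linarith [ht.2] : 0 ≤ 1 - t) ht.1.le (by ring)
    rw [hdiag _ hz, smul_eq_mul, smul_eq_mul] at h
    have h' := mul_nonpos_of_nonneg_of_nonpos (by linarith [ht.2] : 0 ≤ 1 - t) (hdual _ hz)
    exact nonneg_of_mul_nonneg_right (by linarith) ht.1
  have hIoo : Set.Ioo (0 : ℝ) 1 ∈ nhdsWithin 0 (Set.Ioi 0) := Ioo_mem_nhdsGT one_pos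
  have htend : Tendsto (fun t : ℝ => (1 - t) • u + t • y) (nhdsWithin 0 (Set.Ioi 0))
      (nhdsWithin u C) := by
    refine tendsto_nhdsWithin_iff.2 ⟨?_, mem_of_superset hIoo hmem⟩
    have : Continuous fun t : ℝ => (1 - t) • u + t • y := by fun_prop
    simpa using (this.tendsto 0).mono_left nhdsWithin_le_nhds
  obtain ⟨t, ht, hlt⟩ := ((eventually_of_mem hIoo fun _ h => h).and
    (htend.eventually (husc y hy u hu 0 hneg))).exists
  exact (hpos t ht).not_gt hlt

lemma exists_solution_of_isCompact {C : Set E} (hne : C.Nonempty) (hC : IsCompact C)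
    (hCconv : Convex ℝ C) {ψ : E → E → ℝ}
    (hdiag : ∀ x ∈ C, ψ x x = 0)
    (husc : ∀ y ∈ C, UpperSemicontinuousOn (fun x => ψ x y) C)
    (hconv : ∀ x ∈ C, ConvexOn ℝ C (ψ x))
    (hlsc : ∀ x ∈ C, LowerSemicontinuousOn (ψ x) C)
    (hmono : ∀ x ∈ C, ∀ y ∈ C, ψ x y + ψ y x ≤ 0) :
    ∃ u ∈ C, ∀ y ∈ C, 0 ≤ ψ u y := by
  have hdual : (C ∩ ⋂ y ∈ C, ψ y ⁻¹' Set.Iic 0).Nonempty := by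
    rw [Set.nonempty_iff_ne_empty]
    intro hempty
    obtain ⟨s, hs⟩ := (LowerSemicontinuousOn.inter_biInter_preimage_Iic_eq_empty_iff_exists_finset
      hC hlsc).1 hempty
    obtain ⟨u, hu, hsu⟩ := exists_forall_finite_nonpos hne hC hCconv hconv hlsc hmono
      (fun i : s => ((i : C) : E)) (fun i => (i : C).2)
    obtain ⟨i, hi, hlt⟩ := hs u hu
    exact (hsu ⟨i, hi⟩).not_gt hlt
  obtain ⟨u, hu, hall⟩ := hdual
  exact ⟨u, hu, minty hCconv hdiag husc hconv hu fun y hy => Set.mem_iInter₂.1 hall y hy⟩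

/-- A point of `K` close enough to `w` along the segment from `w` to `y` lies in the truncated set,
so that convexity carries nonnegativity of `ψ(u,·)` from that point to `y`. -/
lemma solution_of_truncated {K : Set E} (hK : Convex ℝ K) {ψ : E → E → ℝ} {u w : E} {r : ℝ}
    (hconv : ConvexOn ℝ K (ψ u))
    (hsol : ∀ y ∈ K ∩ Metric.closedBall 0 r, 0 ≤ ψ u y)
    (hw : w ∈ K) (hwr : ‖w‖ < r) (huw : ψ u w ≤ 0) :
    ∀ y ∈ K, 0 ≤ ψ u y := by
  intro y hy
  have hcont : Continuous fun t : ℝ => ‖(1 - t) • w + t • y‖ := by fun_prop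
  have hev : ∀ᶠ t in nhdsWithin (0 : ℝ) (Set.Ioi 0), ‖(1 - t) • w + t • y‖ < r :=
    ((hcont.tendsto 0).mono_left nhdsWithin_le_nhds).eventually_lt_const (by simpa using hwr)
  obtain ⟨t, ht, hlt⟩ := ((eventually_of_mem (Ioo_mem_nhdsGT (one_pos (α := ℝ)))
    fun _ h => h).and hev).exists
  have h1t : 0 ≤ 1 - t := by linarith [ht.2]
  have h0 := hsol _ ⟨hK hw hy h1t ht.1.le (by ring), by simpa using hlt.le⟩
  have h := hconv.2 hw hy h1t ht.1.le (by ring)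
  rw [smul_eq_mul, smul_eq_mul] at h
  have h' := mul_nonpos_of_nonneg_of_nonpos h1t huw
  exact nonneg_of_mul_nonneg_right (by linarith) ht.1

end Equilibrium

/-- Theorem 3.2: if `K` is a nonempty closed convex subset of `ℝⁿ` and `ψ` satisfies
(L1)–(L5), then the equilibrium problem has a solution. -/
theorem existence_L1_L5 (n : ℕ)
    (K : Set (EuclideanSpace ℝ (Fin n))) (hKne : K.Nonempty)
    (hKcl : IsClosed K) (hKconv : Convex ℝ K)
    (ψ : EuclideanSpace ℝ (Fin n) → EuclideanSpace ℝ (Fin n) → ℝ)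
    (hL1 : ∀ x ∈ K, ψ x x = 0)
    (hL2 : ∀ y ∈ K, UpperSemicontinuousOn (fun x => ψ x y) K)
    (hL3conv : ∀ x ∈ K, ConvexOn ℝ K (ψ x))
    (hL3lsc : ∀ x ∈ K, LowerSemicontinuousOn (ψ x) K)
    (hL4 : ∀ x ∈ K, ∀ y ∈ K, ψ x y + ψ y x ≤ 0)
    (hL5 : ∀ y : ℕ → EuclideanSpace ℝ (Fin n), (∀ m, y m ∈ K) →
      Tendsto (fun m => ‖y m‖) atTop atTop →
      ∃ u ∈ K, ∃ m₀ : ℕ, ∀ m ≥ m₀, ψ (y m) u ≤ 0) :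
    ∃ u ∈ K, ∀ y ∈ K, 0 ≤ ψ u y := by
  obtain ⟨x₀, hx₀⟩ := hKne
  have htrunc : ∀ m : ℕ, ∃ u ∈ K ∩ Metric.closedBall 0 (m + ‖x₀‖),
      ∀ y ∈ K ∩ Metric.closedBall 0 (m + ‖x₀‖), 0 ≤ ψ u y := by
    intro m
    have hsub : K ∩ Metric.closedBall 0 ((m : ℝ) + ‖x₀‖) ⊆ K := Set.inter_subset_left
    have hcv : Convex ℝ (K ∩ Metric.closedBall 0 ((m : ℝ) + ‖x₀‖)) :=
      hKconv.inter (convex_closedBall _ _)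
    exact exists_solution_of_isCompact (C := K ∩ Metric.closedBall 0 ((m : ℝ) + ‖x₀‖))
      ⟨x₀, hx₀, by simp⟩
      ((isCompact_closedBall _ _).inter_left hKcl) hcv (fun x hx => hL1 x hx.1)
      (fun y hy => (hL2 y hy.1).mono hsub) (fun x hx => (hL3conv x hx.1).subset hsub hcv)
      (fun x hx => (hL3lsc x hx.1).mono hsub) (fun x hx y hy => hL4 x hx.1 y hy.1)
  choose u hu hsol using htrunc
  by_cases hcase : ∃ m : ℕ, ‖u m‖ < m + ‖x₀‖
  · obtain ⟨m, hm⟩ := hcase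
    exact ⟨u m, (hu m).1, solution_of_truncated hKconv (hL3conv _ (hu m).1) (hsol m) (hu m).1 hm
      (hL1 _ (hu m).1).le⟩
  · push Not at hcase
    obtain ⟨w, hw, m₀, hle⟩ := hL5 u (fun m => (hu m).1)
      (tendsto_atTop_mono (fun m => by linarith [hcase m, norm_nonneg x₀])
        tendsto_natCast_atTop_atTop)
    obtain ⟨k, hk⟩ := exists_nat_gt ‖w‖
    have hk' : (k : ℝ) ≤ (max k m₀ : ℕ) := by exact_mod_cast le_max_left k m₀
    exact ⟨u (max k m₀), (hu _).1, solution_of_truncated hKconv (hL3conv _ (hu _).1) (hsol _) hw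
      (by linarith [norm_nonneg x₀]) (hle _ (le_max_right _ _))⟩
end

section
/- (Lemma 4.1, second part.) Fix x̄ ∈ K, ε, λ > 0. Suppose f and h both satisfy conditions (L1)–(L4) on K, x ↦ ∇₁d(x,x̄) is continuous and monotone on K, and condition (L6) holds for g = ε f + h: for every sequence {yᵐ} ⊂ K with ‖yᵐ‖ → ∞, liminf_{m→∞} [g(x̄,yᵐ) + λ⁻¹⟨∇₁d(yᵐ,x̄), yᵐ − x̄⟩] > 0. Then the regularized bifunction f̄ satisfies condition (L5): for every sequence {yᵐ} ⊂ K with ‖yᵐ‖ → ∞ there exist u ∈ K and m₀ ∈ ℕ with f̄(yᵐ,u) ≤ 0 for all m ≥ m₀ (one may take u = x̄). -/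
open scoped RealInnerProductSpace
open Filter

/-- Lemma 4.1, second part: if `f` and `h` satisfy (L1)–(L4), `x ↦ ∇₁d(x, x̄)` is continuous
and monotone on `K`, and condition (L6) holds for `g = ε f + h`, then the regularized
bifunction `f̄` satisfies condition (L5). -/
theorem lemma41_second_part (n : ℕ)
    (K : Set (EuclideanSpace ℝ (Fin n))) (hKne : K.Nonempty)
    (hKcl : IsClosed K) (hKconv : Convex ℝ K)
    (f h : EuclideanSpace ℝ (Fin n) → EuclideanSpace ℝ (Fin n) → ℝ)
    (xbar : EuclideanSpace ℝ (Fin n)) (hxbar : xbar ∈ K)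
    (ε lam : ℝ) (hε : 0 < ε) (hlam : 0 < lam)
    (d : EuclideanSpace ℝ (Fin n) → EuclideanSpace ℝ (Fin n) → ℝ)
    (gd : EuclideanSpace ℝ (Fin n) → EuclideanSpace ℝ (Fin n))
    (U : Set (EuclideanSpace ℝ (Fin n))) (hU : IsOpen U) (hKU : K ⊆ U)
    (hgrad : ∀ x ∈ U, HasGradientAt (fun u => d u xbar) (gd x) x)
    (hgdcont : ContinuousOn gd K)
    (hgdmono : ∀ x ∈ K, ∀ y ∈ K, 0 ≤ ⟪gd y - gd x, y - x⟫)
    -- (L1)–(L4) for f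
    (hfL1 : ∀ x ∈ K, f x x = 0)
    (hfL2 : ∀ y ∈ K, UpperSemicontinuousOn (fun x => f x y) K)
    (hfL3conv : ∀ x ∈ K, ConvexOn ℝ K (f x))
    (hfL3lsc : ∀ x ∈ K, LowerSemicontinuousOn (f x) K)
    (hfL4 : ∀ x ∈ K, ∀ y ∈ K, f x y + f y x ≤ 0)
    -- (L1)–(L4) for h
    (hhL1 : ∀ x ∈ K, h x x = 0)
    (hhL2 : ∀ y ∈ K, UpperSemicontinuousOn (fun x => h x y) K)
    (hhL3conv : ∀ x ∈ K, ConvexOn ℝ K (h x))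
    (hhL3lsc : ∀ x ∈ K, LowerSemicontinuousOn (h x) K)
    (hhL4 : ∀ x ∈ K, ∀ y ∈ K, h x y + h y x ≤ 0)
    -- Condition (L6) for g = ε f + h : liminf > 0 along any norm-divergent sequence in K
    (hL6 : ∀ y : ℕ → EuclideanSpace ℝ (Fin n), (∀ m, y m ∈ K) →
      Tendsto (fun m => ‖y m‖) atTop atTop →
      ∃ c > 0, ∀ᶠ m in atTop,
        c ≤ (ε * f xbar (y m) + h xbar (y m)) + lam⁻¹ * ⟪gd (y m), y m - xbar⟫)
    -- the regularized bifunction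
    (fbar : EuclideanSpace ℝ (Fin n) → EuclideanSpace ℝ (Fin n) → ℝ)
    (hfbar : ∀ x y, fbar x y = ε * f x y + h x y + (1 / lam) * ⟪gd x, y - x⟫) :
    ∀ y : ℕ → EuclideanSpace ℝ (Fin n), (∀ m, y m ∈ K) →
      Tendsto (fun m => ‖y m‖) atTop atTop →
      ∃ u ∈ K, ∃ m₀ : ℕ, ∀ m ≥ m₀, fbar (y m) u ≤ 0 := by
  intro y hyK hy
  obtain ⟨c, hc, hev⟩ := hL6 y hyK hy
  obtain ⟨m₀, hm₀⟩ := eventually_atTop.1 hev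
  -- Taking `u = xbar`, monotonicity (L4) bounds `fbar (y m) xbar` above by the negative of the
  -- quantity in (L6), which is eventually at least `c > 0`.
  refine ⟨xbar, hxbar, m₀, fun m hm => ?_⟩
  have h1 := hm₀ m hm
  have h2 := mul_nonpos_of_nonneg_of_nonpos hε.le (hfL4 xbar hxbar (y m) (hyK m))
  have h3 := hhL4 xbar hxbar (y m) (hyK m)
  rw [hfbar, one_div, ← neg_sub (y m) xbar, inner_neg_right]
  linarith
end

section
/- (Corollary 4.1(ii).) Fix x̄ ∈ K, ε, λ > 0, and set g = ε f + h where f,h satisfy (L1)–(L3). Assume: (a) there exists v ∈ ℝⁿ with g(x̄,y) ≥ ⟨v, y−x̄⟩ for all y ∈ K (a subgradient of g(x̄,·) at x̄, using g(x̄,x̄)=0); (b) ∇₁d(x̄,x̄) = 0; (c) x ↦ ∇₁d(x,x̄) is strongly monotone on K with modulus μ > 0, i.e., ⟨∇₁d(y,x̄) − ∇₁d(x,x̄), y−x⟩ ≥ μ‖y−x‖² for all x,y ∈ K. Then for every sequence {yᵐ} ⊂ K with ‖yᵐ‖ → ∞ one has liminf_{m→∞} [g(x̄,yᵐ) + λ⁻¹⟨∇₁d(yᵐ,x̄),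 yᵐ − x̄⟩] = ∞; in particular condition (L6) holds. -/
/-! With `r = ‖y m - x̄‖`, the subgradient inequality and Cauchy-Schwarz bound `g(x̄, y m)` below
by `-‖v‖ r`, while strong monotonicity between `x̄` and `y m`, together with `∇₁d(x̄, x̄) = 0`,
bounds the gradient term below by `λ⁻¹ μ r²`. Since `r → ∞`, the quadratic term dominates and
`r (λ⁻¹ μ r - ‖v‖) → ∞`. -/

open scoped RealInnerProductSpace
open Filter

/-- Corollary 4.1(ii): if `g(x̄,·)` has a subgradient at `x̄` and `∇₁d(·,x̄)` is strongly
monotone on `K` with `∇₁d(x̄,x̄)=0`, then along any norm-divergent sequence in `K` the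
regularizing quantity tends to `+∞`; in particular condition (L6) holds. -/
theorem corollary41_ii (n : ℕ)
    (K : Set (EuclideanSpace ℝ (Fin n))) (hKne : K.Nonempty)
    (hKcl : IsClosed K) (hKconv : Convex ℝ K)
    (f h : EuclideanSpace ℝ (Fin n) → EuclideanSpace ℝ (Fin n) → ℝ)
    (xbar : EuclideanSpace ℝ (Fin n)) (hxbar : xbar ∈ K)
    (ε lam : ℝ) (hε : 0 < ε) (hlam : 0 < lam)
    (d : EuclideanSpace ℝ (Fin n) → EuclideanSpace ℝ (Fin n) → ℝ)
    (gd : EuclideanSpace ℝ (Fin n) → EuclideanSpace ℝ (Fin n))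
    (U : Set (EuclideanSpace ℝ (Fin n))) (hU : IsOpen U) (hKU : K ⊆ U)
    (hgrad : ∀ x ∈ U, HasGradientAt (fun u => d u xbar) (gd x) x)
    -- (L1)–(L3) for f
    (hfL1 : ∀ x ∈ K, f x x = 0)
    (hfL2 : ∀ y ∈ K, UpperSemicontinuousOn (fun x => f x y) K)
    (hfL3conv : ∀ x ∈ K, ConvexOn ℝ K (f x))
    (hfL3lsc : ∀ x ∈ K, LowerSemicontinuousOn (f x) K)
    -- (L1)–(L3) for h
    (hhL1 : ∀ x ∈ K, h x x = 0)
    (hhL2 : ∀ y ∈ K, UpperSemicontinuousOn (fun x => h x y) K)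
    (hhL3conv : ∀ x ∈ K, ConvexOn ℝ K (h x))
    (hhL3lsc : ∀ x ∈ K, LowerSemicontinuousOn (h x) K)
    -- (a) a subgradient of g(x̄,·) at x̄, where g = ε f + h
    (v : EuclideanSpace ℝ (Fin n))
    (hv : ∀ y ∈ K, ⟪v, y - xbar⟫ ≤ ε * f xbar y + h xbar y)
    -- (b) ∇₁d(x̄,x̄) = 0
    (hgd0 : gd xbar = 0)
    -- (c) strong monotonicity of ∇₁d(·,x̄) on K with modulus μ > 0
    (μ : ℝ) (hμ : 0 < μ)
    (hstrong : ∀ x ∈ K, ∀ y ∈ K, μ * ‖y - x‖ ^ 2 ≤ ⟪gd y - gd x, y - x⟫) :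
    ∀ y : ℕ → EuclideanSpace ℝ (Fin n), (∀ m, y m ∈ K) →
      Tendsto (fun m => ‖y m‖) atTop atTop →
      (Tendsto (fun m =>
          (ε * f xbar (y m) + h xbar (y m)) + lam⁻¹ * ⟪gd (y m), y m - xbar⟫)
        atTop atTop ∧
       ∃ c > 0, ∀ᶠ m in atTop,
          c ≤ (ε * f xbar (y m) + h xbar (y m)) + lam⁻¹ * ⟪gd (y m), y m - xbar⟫) := by
  intro y hyK hy
  have hr : Tendsto (fun m => ‖y m - xbar‖) atTop atTop :=
    tendsto_atTop_mono (fun m => norm_sub_norm_le (y m) xbar)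
      (tendsto_atTop_add_const_right _ (-‖xbar‖) hy)
  have hquad : Tendsto
      (fun m => ‖y m - xbar‖ * (lam⁻¹ * μ * ‖y m - xbar‖ - ‖v‖)) atTop atTop :=
    hr.atTop_mul_atTop₀ (tendsto_atTop_add_const_right _ (-‖v‖)
      (hr.const_mul_atTop (by positivity : 0 < lam⁻¹ * μ)))
  have hmain : Tendsto (fun m =>
      (ε * f xbar (y m) + h xbar (y m)) + lam⁻¹ * ⟪gd (y m), y m - xbar⟫) atTop atTop := by
    refine tendsto_atTop_mono (fun m => ?_) hquad
    have hsub := hv (y m) (hyK m)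
    have hcs : -(‖v‖ * ‖y m - xbar‖) ≤ ⟪v, y m - xbar⟫ :=
      neg_le_of_abs_le (abs_real_inner_le_norm v (y m - xbar))
    have hmono : μ * ‖y m - xbar‖ ^ 2 ≤ ⟪gd (y m), y m - xbar⟫ := by
      simpa [hgd0] using hstrong xbar hxbar (y m) (hyK m)
    have hscaled := mul_le_mul_of_nonneg_left hmono (inv_pos.mpr hlam).le
    linear_combination hsub + hcs + hscaled
  exact ⟨hmain, 1, one_pos, hmain.eventually_ge_atTop 1⟩
end

section
/- (Proposition 2.1.) Let S ⊆ ℝⁿ be a nonempty closed convex set and let D : ℝⁿ×ℝⁿ → [0,∞] satisfy properties (H6) and (H7). Let {xᵏ} ⊂ S and {yᵏ} ⊂ int S be sequences with lim_{k→∞} D(xᵏ,yᵏ) = 0. If one of the two sequences converges, then the other converges to the same limit. -/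
/-!
By (H6), points `u`, `w` of the open segment from `y ∈ int S` to `x ∈ S`, with `w` nearer to `y`,
satisfy `D u w ≤ D x y` (`D_segment_le`). Suppose `‖xᵏ - yᵏ‖` does not tend to `0`; along a
subsequence it is at least some `ε > 0`, and the unit vectors `dᵏ` pointing from `yᵏ` to `xᵏ`
converge to a unit vector `d`. If `xᵏ → a`, the points `xᵏ - (ε/4) dᵏ` and `xᵏ - (ε/2) dᵏ` lie on
the open segments and have the distinct limits `a - (ε/4) d` and `a - (ε/2) d`, while their
`D`-values tend to `0`, against (H7). If `yᵏ → a`, use `yᵏ + (ε/2) dᵏ` and `yᵏ + (ε/4) dᵏ`.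
Measuring these points from the convergent sequence is what makes a boundedness argument for the
other sequence unnecessary. Hence `xᵏ - yᵏ → 0`, and the two limits agree.
-/

open Filter
open scoped ENNReal

/-- For `u = t • x + (1 - t) • y` and `w = s • x + (1 - s) • y`, (H6) on the segment from `y` to
`x` gives `D x w ≤ D x y`, and (H6) on the segment from `w` to `x` gives `D u w ≤ D x w`. -/
theorem D_segment_le {E : Type*} [NormedAddCommGroup E] [NormedSpace ℝ E] {S : Set E}
    (hSconv : Convex ℝ S) {D : E → E → ℝ≥0∞}
    (hH6 : ∀ z ∈ S, ∀ y ∈ interior S, ∀ α : ℝ, α ∈ Set.Ioo (0 : ℝ) 1 →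
      D z (α • z + (1 - α) • y) + D (α • z + (1 - α) • y) y ≤ D z y)
    {x y : E} (hx : x ∈ S) (hy : y ∈ interior S) {s t : ℝ} (hs : 0 < s) (hst : s < t)
    (ht : t < 1) :
    D (t • x + (1 - t) • y) (s • x + (1 - s) • y) ≤ D x y := by
  have hw : s • x + (1 - s) • y ∈ interior S :=
    hSconv.combo_self_interior_mem_interior hx hy hs.le (by linarith) (by ring)
  have h1 : D x (s • x + (1 - s) • y) ≤ D x y :=
    le_self_add.trans (hH6 x hx y hy s ⟨hs, by linarith⟩)
  have hs1 : 0 < 1 - s := by linarith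
  -- The coefficient placing `u` on the segment from `w` to `x`.
  have h2 := hH6 x hx _ hw ((t - s) / (1 - s))
    ⟨div_pos (by linarith) hs1, (div_lt_one hs1).2 (by linarith)⟩
  have hu : ((t - s) / (1 - s)) • x + (1 - (t - s) / (1 - s)) • (s • x + (1 - s) • y)
      = t • x + (1 - t) • y := by
    match_scalars <;> field_simp <;> ring
  rw [hu] at h2
  exact (le_add_self.trans h2).trans h1

/-- If `x` or `y` converges and `D (x k) (y k) → 0`, then `x - y → 0`. -/
theorem tendsto_sub_zero_of_D {E : Type*} [NormedAddCommGroup E] [NormedSpace ℝ E]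
    [ProperSpace E] {S : Set E} (hSconv : Convex ℝ S) {D : E → E → ℝ≥0∞}
    (hH6 : ∀ z ∈ S, ∀ y ∈ interior S, ∀ α : ℝ, α ∈ Set.Ioo (0 : ℝ) 1 →
      D z (α • z + (1 - α) • y) + D (α • z + (1 - α) • y) y ≤ D z y)
    (hH7 : ∀ (u v : ℕ → E) (a b : E),
      (∀ k, u k ∈ interior S) → (∀ k, v k ∈ interior S) →
      Tendsto u atTop (nhds a) → Tendsto v atTop (nhds b) → a ≠ b →
      0 < Filter.liminf (fun k => D (u k) (v k)) atTop)
    {x y : ℕ → E} (hx : ∀ k, x k ∈ S) (hy : ∀ k, y k ∈ interior S)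
    (hD0 : Tendsto (fun k => D (x k) (y k)) atTop (nhds 0)) {a : E}
    (hconv : Tendsto x atTop (nhds a) ∨ Tendsto y atTop (nhds a)) :
    Tendsto (fun k => x k - y k) atTop (nhds 0) := by
  by_contra hnot
  obtain ⟨ε, hε, hfreq⟩ : ∃ ε > 0, ∃ᶠ k in atTop, ε ≤ ‖x k - y k‖ := by
    rw [NormedAddGroup.tendsto_nhds_zero] at hnot
    push Not at hnot
    exact hnot
  obtain ⟨φ, hφ, hφε⟩ := extraction_of_frequently_atTop hfreq
  have hpos : ∀ k, 0 < ‖x (φ k) - y (φ k)‖ := fun k => hε.trans_le (hφε k)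
  obtain ⟨d, hd, ψ, hψ, hψd⟩ := (isCompact_sphere (0 : E) 1).tendsto_subseq
    (x := fun k => ‖x (φ k) - y (φ k)‖⁻¹ • (x (φ k) - y (φ k))) (fun k => by
      rw [mem_sphere_zero_iff_norm, norm_smul, norm_inv, norm_norm,
        inv_mul_cancel₀ (hpos k).ne'])
  have hd0 : d ≠ 0 := by
    rintro rfl
    simp at hd
  have hσ : Tendsto (φ ∘ ψ) atTop atTop := hφ.tendsto_atTop.comp hψ.tendsto_atTop
  have hσε : ∀ k, ε ≤ ‖x (φ (ψ k)) - y (φ (ψ k))‖ := fun k => hφε (ψ k)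
  have hσd : Tendsto (fun k => ‖x (φ (ψ k)) - y (φ (ψ k))‖⁻¹ • (x (φ (ψ k)) - y (φ (ψ k))))
      atTop (nhds d) := hψd
  -- Points of the open segments, ordered strictly along them, cannot have distinct limits:
  -- their `D`-values are squeezed to `0`, against (H7).
  have hlim : ∀ (s t : ℕ → ℝ) (p q : E), (∀ k, 0 < s k) → (∀ k, s k < t k) → (∀ k, t k < 1) →
      Tendsto (fun k => t k • x (φ (ψ k)) + (1 - t k) • y (φ (ψ k))) atTop (nhds p) →
      Tendsto (fun k => s k • x (φ (ψ k)) + (1 - s k) • y (φ (ψ k))) atTop (nhds q) →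
      p = q := by
    intro s t p q hs hst ht hp hq
    by_contra hpq
    have h7 := hH7 _ _ p q
      (fun k => hSconv.combo_self_interior_mem_interior (hx (φ (ψ k))) (hy (φ (ψ k)))
        ((hs k).trans (hst k)).le (by linarith [ht k]) (by ring))
      (fun k => hSconv.combo_self_interior_mem_interior (hx (φ (ψ k))) (hy (φ (ψ k)))
        (hs k).le (by linarith [ht k, hst k]) (by ring)) hp hq hpq
    have h0 := tendsto_of_tendsto_of_tendsto_of_le_of_le tendsto_const_nhds (hD0.comp hσ)
      (fun k => zero_le) (fun k => D_segment_le hSconv hH6 (hx (φ (ψ k))) (hy (φ (ψ k)))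
        (hs k) (hst k) (ht k))
    rw [h0.liminf_eq] at h7
    exact h7.false
  -- The segment parameter corresponding to a step of length `c` from an endpoint.
  have hpar : ∀ k c, 0 < c → c ≤ ε / 2 → 0 < c * ‖x (φ (ψ k)) - y (φ (ψ k))‖⁻¹ ∧
      c * ‖x (φ (ψ k)) - y (φ (ψ k))‖⁻¹ < 1 := by
    intro k c hc hcε
    have hN := hpos (ψ k)
    refine ⟨mul_pos hc (inv_pos.2 hN), ?_⟩
    rw [← div_eq_mul_inv, div_lt_one hN]
    linarith [hσε k]
  have hmono : ∀ k, ε / 4 * ‖x (φ (ψ k)) - y (φ (ψ k))‖⁻¹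
      < ε / 2 * ‖x (φ (ψ k)) - y (φ (ψ k))‖⁻¹ := fun k =>
    mul_lt_mul_of_pos_right (by linarith) (inv_pos.2 (hpos (ψ k)))
  have hne : (ε / 2) • d ≠ (ε / 4) • d := by
    intro h
    have := smul_left_injective ℝ hd0 h
    linarith
  rcases hconv with hxa | hya
  · have key : ∀ c : ℝ, Tendsto (fun k => (1 - c * ‖x (φ (ψ k)) - y (φ (ψ k))‖⁻¹) • x (φ (ψ k))
        + (1 - (1 - c * ‖x (φ (ψ k)) - y (φ (ψ k))‖⁻¹)) • y (φ (ψ k))) atTop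
        (nhds (a - c • d)) := fun c =>
      ((hxa.comp hσ).sub (hσd.const_smul c)).congr fun k => by
        simp only [Function.comp_apply]
        module
    have h := hlim _ _ _ _
      (fun k => sub_pos.2 (hpar k (ε / 2) (by linarith) le_rfl).2)
      (fun k => sub_lt_sub_left (hmono k) 1)
      (fun k => sub_lt_self 1 (hpar k (ε / 4) (by linarith) (by linarith)).1)
      (key (ε / 4)) (key (ε / 2))
    exact hne (sub_right_injective h).symm
  · have key : ∀ c : ℝ, Tendsto (fun k => (c * ‖x (φ (ψ k)) - y (φ (ψ k))‖⁻¹) • x (φ (ψ k))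
        + (1 - c * ‖x (φ (ψ k)) - y (φ (ψ k))‖⁻¹) • y (φ (ψ k))) atTop
        (nhds (a + c • d)) := fun c =>
      ((hya.comp hσ).add (hσd.const_smul c)).congr fun k => by
        simp only [Function.comp_apply]
        module
    have h := hlim _ _ _ _
      (fun k => (hpar k (ε / 4) (by linarith) (by linarith)).1) hmono
      (fun k => (hpar k (ε / 2) (by linarith) le_rfl).2)
      (key (ε / 2)) (key (ε / 4))
    exact hne (add_right_injective a h)

/-- Proposition 2.1: if `D : ℝⁿ×ℝⁿ → [0,∞]` satisfies (H6) and (H7), `{xᵏ} ⊂ S`,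
`{yᵏ} ⊂ int S` and `D(xᵏ,yᵏ) → 0`, then if one of the sequences converges, the other
converges to the same limit. -/
theorem proposition21 (n : ℕ)
    (S : Set (EuclideanSpace ℝ (Fin n))) (hSne : S.Nonempty)
    (hScl : IsClosed S) (hSconv : Convex ℝ S)
    (D : EuclideanSpace ℝ (Fin n) → EuclideanSpace ℝ (Fin n) → ℝ≥0∞)
    -- (H6)
    (hH6 : ∀ z ∈ S, ∀ y ∈ interior S, ∀ α : ℝ, α ∈ Set.Ioo (0 : ℝ) 1 →
      D z (α • z + (1 - α) • y) + D (α • z + (1 - α) • y) y ≤ D z y)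
    -- (H7)
    (hH7 : ∀ (u v : ℕ → EuclideanSpace ℝ (Fin n)) (a b : EuclideanSpace ℝ (Fin n)),
      (∀ k, u k ∈ interior S) → (∀ k, v k ∈ interior S) →
      Tendsto u atTop (nhds a) → Tendsto v atTop (nhds b) → a ≠ b →
      0 < Filter.liminf (fun k => D (u k) (v k)) atTop)
    (x y : ℕ → EuclideanSpace ℝ (Fin n))
    (hx : ∀ k, x k ∈ S) (hy : ∀ k, y k ∈ interior S)
    (hD0 : Tendsto (fun k => D (x k) (y k)) atTop (nhds 0)) :
    (∀ a, Tendsto x atTop (nhds a) → Tendsto y atTop (nhds a)) ∧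
    (∀ a, Tendsto y atTop (nhds a) → Tendsto x atTop (nhds a)) := by
  refine ⟨fun a ha => ?_, fun a ha => ?_⟩
  · have h := tendsto_sub_zero_of_D hSconv hH6 hH7 hx hy hD0 (Or.inl ha)
    simpa using ha.sub h
  · have h := tendsto_sub_zero_of_D hSconv hH6 hH7 hx hy hD0 (Or.inr ha)
    simpa using h.add ha
end

section
/- (Proposition 2.2.) Let S ⊆ ℝⁿ be a nonempty closed convex set and let D : ℝⁿ×ℝⁿ → [0,∞] satisfy properties (H6) and (H7). Let {xᵏ} ⊂ S and {yᵏ} ⊂ int S be sequences with lim_{k→∞} D(xᵏ,yᵏ) = 0, and suppose one of the two sequences is bounded. Then: (a) the other sequence is also bounded; (b) lim_{k→∞} (xᵏ − yᵏ) = 0. -/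
/-!
The mechanism is to move one point of each pair along the segment `[xᵏ, yᵏ]` so that it stays within
distance `1` of the other: property (H6) bounds the value of `D` at the new pair by
`D (xᵏ) (yᵏ)`, and with the step `(2 + ‖xᵏ - yᵏ‖)⁻¹` the new difference tends to `0` only if the old
one does (`tendsto_zero_of_shrink`). If `{yᵏ}` is bounded, moving `xᵏ` towards `yᵏ` also brings it
into `int S`, so both sequences are bounded and interior, and (H7) along convergent subsequences
gives the claim (`tendsto_sub_of_interior`, `tendsto_sub_of_bounded_right`). If `{xᵏ}` is bounded,
moving `yᵏ` towards `xᵏ` produces a bounded interior sequence, which reduces to the previous case;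
this is how points `xᵏ` on the boundary of `S` are handled. Boundedness of the other sequence
follows from `xᵏ - yᵏ → 0`.
-/

open Filter Bornology
open scoped ENNReal

/-- The step length `(2 + ‖v‖)⁻¹` lies in `(0, 1)`, as a coefficient in (H6) must. -/
theorem shrink_mem {E : Type*} [NormedAddCommGroup E] (v : E) :
    (2 + ‖v‖)⁻¹ ∈ Set.Ioo (0 : ℝ) 1 := by
  have := norm_nonneg v
  exact ⟨by positivity, inv_lt_one_of_one_lt₀ (by linarith)⟩

theorem norm_shrink {E : Type*} [NormedAddCommGroup E] [NormedSpace ℝ E] (v : E) :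
    ‖(2 + ‖v‖)⁻¹ • v‖ = ‖v‖ / (2 + ‖v‖) := by
  rw [norm_smul, Real.norm_of_nonneg (shrink_mem v).1.le]
  ring

theorem isBounded_range_shrink {E : Type*} [NormedAddCommGroup E] [NormedSpace ℝ E]
    (v : ℕ → E) : IsBounded (Set.range fun k => (2 + ‖v k‖)⁻¹ • v k) := by
  refine isBounded_iff_forall_norm_le.2 ⟨1, ?_⟩
  rintro _ ⟨k, rfl⟩
  have := norm_nonneg (v k)
  rw [norm_shrink, div_le_one (by positivity)]
  linarith

theorem tendsto_zero_of_shrink {E : Type*} [NormedAddCommGroup E] [NormedSpace ℝ E]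
    {v : ℕ → E} (h : Tendsto (fun k => (2 + ‖v k‖)⁻¹ • v k) atTop (nhds 0)) :
    Tendsto v atTop (nhds 0) := by
  have hs := h.norm
  simp only [norm_shrink, norm_zero] at hs
  -- `r ↦ r / (2 + r)` has the inverse `s ↦ 2 * s / (1 - s)`, continuous at `0`.
  have h2 := (hs.const_mul 2).div (hs.const_sub 1) (by norm_num)
  rw [tendsto_zero_iff_norm_tendsto_zero]
  convert h2 using 2 with k
  · have := norm_nonneg (v k)
    have h3 : 2 + ‖v k‖ ≠ 0 := by positivity
    have h4 : 1 - ‖v k‖ / (2 + ‖v k‖) = 2 / (2 + ‖v k‖) := by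
      field_simp
      ring
    simp only [Pi.div_apply]
    rw [h4]
    field_simp
  · norm_num

theorem isBounded_range_add {E : Type*} [NormedAddCommGroup E] {u v : ℕ → E}
    (hu : IsBounded (Set.range u)) (hv : IsBounded (Set.range v)) :
    IsBounded (Set.range fun k => u k + v k) := by
  refine (hu.add hv).subset ?_
  rintro _ ⟨k, rfl⟩
  exact Set.add_mem_add ⟨k, rfl⟩ ⟨k, rfl⟩

/-- The case of two bounded sequences in `int S`, where (H7) applies to convergent subsequences. -/
theorem tendsto_sub_of_interior {n : ℕ} {S : Set (EuclideanSpace ℝ (Fin n))}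
    {D : EuclideanSpace ℝ (Fin n) → EuclideanSpace ℝ (Fin n) → ℝ≥0∞}
    (hH7 : ∀ (u v : ℕ → EuclideanSpace ℝ (Fin n)) (a b : EuclideanSpace ℝ (Fin n)),
      (∀ k, u k ∈ interior S) → (∀ k, v k ∈ interior S) →
      Tendsto u atTop (nhds a) → Tendsto v atTop (nhds b) → a ≠ b →
      0 < Filter.liminf (fun k => D (u k) (v k)) atTop)
    {p q : ℕ → EuclideanSpace ℝ (Fin n)}
    (hp : ∀ k, p k ∈ interior S) (hq : ∀ k, q k ∈ interior S)
    (hpb : IsBounded (Set.range p)) (hqb : IsBounded (Set.range q))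
    (hD : Tendsto (fun k => D (p k) (q k)) atTop (nhds 0)) :
    Tendsto (fun k => p k - q k) atTop (nhds 0) := by
  refine tendsto_of_subseq_tendsto fun ns hns => ?_
  obtain ⟨c, -, φ, hφ, hc⟩ := tendsto_subseq_of_bounded (hpb.prod hqb)
    (x := fun k => (p (ns k), q (ns k))) (fun k => ⟨⟨_, rfl⟩, ⟨_, rfl⟩⟩)
  have ha : Tendsto (fun k => p (ns (φ k))) atTop (nhds c.1) := hc.fst_nhds
  have hb : Tendsto (fun k => q (ns (φ k))) atTop (nhds c.2) := hc.snd_nhds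
  have hab : c.1 = c.2 := by
    by_contra hne
    have hpos := hH7 _ _ _ _ (fun k => hp (ns (φ k))) (fun k => hq (ns (φ k))) ha hb hne
    have h0 := (hD.comp (hns.comp hφ.tendsto_atTop)).liminf_eq
    exact hpos.ne' h0
  exact ⟨φ, by simpa [hab] using ha.sub hb⟩

theorem tendsto_sub_of_bounded_right {n : ℕ} {S : Set (EuclideanSpace ℝ (Fin n))}
    (hSconv : Convex ℝ S)
    {D : EuclideanSpace ℝ (Fin n) → EuclideanSpace ℝ (Fin n) → ℝ≥0∞}
    (hH6 : ∀ z ∈ S, ∀ y ∈ interior S, ∀ α : ℝ, α ∈ Set.Ioo (0 : ℝ) 1 →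
      D z (α • z + (1 - α) • y) + D (α • z + (1 - α) • y) y ≤ D z y)
    (hH7 : ∀ (u v : ℕ → EuclideanSpace ℝ (Fin n)) (a b : EuclideanSpace ℝ (Fin n)),
      (∀ k, u k ∈ interior S) → (∀ k, v k ∈ interior S) →
      Tendsto u atTop (nhds a) → Tendsto v atTop (nhds b) → a ≠ b →
      0 < Filter.liminf (fun k => D (u k) (v k)) atTop)
    {x y : ℕ → EuclideanSpace ℝ (Fin n)}
    (hx : ∀ k, x k ∈ S) (hy : ∀ k, y k ∈ interior S)
    (hD0 : Tendsto (fun k => D (x k) (y k)) atTop (nhds 0))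
    (hyb : IsBounded (Set.range y)) :
    Tendsto (fun k => x k - y k) atTop (nhds 0) := by
  let t : ℕ → ℝ := fun k => (2 + ‖x k - y k‖)⁻¹
  have ht : ∀ k, t k ∈ Set.Ioo (0 : ℝ) 1 := fun k => shrink_mem _
  let w : ℕ → EuclideanSpace ℝ (Fin n) := fun k => t k • x k + (1 - t k) • y k
  have hwy : ∀ k, w k = t k • (x k - y k) + y k := fun k => by
    simp only [w]
    module
  have hw : ∀ k, w k ∈ interior S := fun k =>
    hSconv.combo_self_interior_mem_interior (hx k) (hy k) (ht k).1.le
      (by linarith [(ht k).2]) (by ring)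
  have hwb : IsBounded (Set.range w) := by
    rw [funext hwy]
    exact isBounded_range_add (isBounded_range_shrink _) hyb
  have hDw : Tendsto (fun k => D (w k) (y k)) atTop (nhds 0) :=
    tendsto_of_tendsto_of_tendsto_of_le_of_le tendsto_const_nhds hD0 (fun _ => zero_le)
      (fun k => le_add_self.trans (hH6 _ (hx k) _ (hy k) _ (ht k)))
  have h := tendsto_sub_of_interior hH7 hw hy hwb hyb hDw
  refine tendsto_zero_of_shrink (h.congr fun k => ?_)
  rw [hwy, add_sub_cancel_right]

/-- Proposition 2.2: if `D : ℝⁿ×ℝⁿ → [0,∞]` satisfies (H6) and (H7), `{xᵏ} ⊂ S`,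
`{yᵏ} ⊂ int S`, `D(xᵏ,yᵏ) → 0` and one of the sequences is bounded, then (a) the other
sequence is also bounded, and (b) `xᵏ − yᵏ → 0`. -/
theorem proposition22 (n : ℕ)
    (S : Set (EuclideanSpace ℝ (Fin n))) (hSne : S.Nonempty)
    (hScl : IsClosed S) (hSconv : Convex ℝ S)
    (D : EuclideanSpace ℝ (Fin n) → EuclideanSpace ℝ (Fin n) → ℝ≥0∞)
    -- (H6)
    (hH6 : ∀ z ∈ S, ∀ y ∈ interior S, ∀ α : ℝ, α ∈ Set.Ioo (0 : ℝ) 1 →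
      D z (α • z + (1 - α) • y) + D (α • z + (1 - α) • y) y ≤ D z y)
    -- (H7)
    (hH7 : ∀ (u v : ℕ → EuclideanSpace ℝ (Fin n)) (a b : EuclideanSpace ℝ (Fin n)),
      (∀ k, u k ∈ interior S) → (∀ k, v k ∈ interior S) →
      Tendsto u atTop (nhds a) → Tendsto v atTop (nhds b) → a ≠ b →
      0 < Filter.liminf (fun k => D (u k) (v k)) atTop)
    (x y : ℕ → EuclideanSpace ℝ (Fin n))
    (hx : ∀ k, x k ∈ S) (hy : ∀ k, y k ∈ interior S)
    (hD0 : Tendsto (fun k => D (x k) (y k)) atTop (nhds 0))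
    (hbdd : IsBounded (Set.range x) ∨ IsBounded (Set.range y)) :
    (IsBounded (Set.range x) ∧ IsBounded (Set.range y)) ∧
    Tendsto (fun k => x k - y k) atTop (nhds 0) := by
  have hsub : Tendsto (fun k => x k - y k) atTop (nhds 0) := by
    rcases hbdd with hxb | hyb
    · let t : ℕ → ℝ := fun k => (2 + ‖x k - y k‖)⁻¹
      have ht : ∀ k, t k ∈ Set.Ioo (0 : ℝ) 1 := fun k => shrink_mem _
      have ht' : ∀ k, 1 - t k ∈ Set.Ioo (0 : ℝ) 1 := fun k =>
        ⟨by linarith [(ht k).2], by linarith [(ht k).1]⟩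
      -- `w k` lies on the segment from `x k` to `y k`, at distance less than `1` from `x k`.
      let w : ℕ → EuclideanSpace ℝ (Fin n) :=
        fun k => (1 - t k) • x k + (1 - (1 - t k)) • y k
      have hxw : ∀ k, x k - w k = t k • (x k - y k) := fun k => by
        simp only [w]
        module
      have hw : ∀ k, w k ∈ interior S := fun k =>
        hSconv.combo_self_interior_mem_interior (hx k) (hy k) (ht' k).1.le
          (by linarith [(ht' k).2]) (by ring)
      have hwb : IsBounded (Set.range w) := by
        have hwx : w = fun k => x k + -(t k • (x k - y k)) := funext fun k => by
          rw [← hxw, neg_sub, add_sub_cancel]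
        rw [hwx]
        refine isBounded_range_add hxb ?_
        refine (isBounded_range_shrink fun k => x k - y k).neg.subset ?_
        rintro _ ⟨k, rfl⟩
        exact Set.neg_mem_neg.2 ⟨k, rfl⟩
      have hDw : Tendsto (fun k => D (x k) (w k)) atTop (nhds 0) :=
        tendsto_of_tendsto_of_tendsto_of_le_of_le tendsto_const_nhds hD0 (fun _ => zero_le)
          (fun k => le_self_add.trans (hH6 _ (hx k) _ (hy k) _ (ht' k)))
      have h := tendsto_sub_of_bounded_right hSconv hH6 hH7 hx hw hDw hwb
      exact tendsto_zero_of_shrink (h.congr hxw)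
    · exact tendsto_sub_of_bounded_right hSconv hH6 hH7 hx hy hD0 hyb
  refine ⟨?_, hsub⟩
  have hb := Metric.isBounded_range_of_tendsto _ hsub
  rcases hbdd with hxb | hyb
  · refine ⟨hxb, ?_⟩
    have hsub' : Tendsto (fun k => y k - x k) atTop (nhds 0) := by simpa using hsub.neg
    simpa using isBounded_range_add (Metric.isBounded_range_of_tendsto _ hsub') hxb
  · exact ⟨by simpa using isBounded_range_add hb hyb, hyb⟩
end

section
/- (Lemma 5.4, quasi-Fejér convergence.) Let S ⊆ ℝⁿ be a nonempty closed convex set and let D : ℝⁿ×ℝⁿ → [0,∞) satisfy (H3), (H5), (H6) and (H7). Let U ⊆ S be nonempty and let {zᵏ} ⊂ int S be quasi-Fejér convergent to U with respect to D, i.e., there exists a nonnegative summable sequence {γ_k} with D(u,z^{k+1}) ≤ D(u,zᵏ) + γ_k for every u ∈ U and every k. Then: (a) {zᵏ} is bounded; (b) if some cluster point z of {zᵏ} belongs to U, then lim_{k→∞} zᵏ = z. -/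
open Filter Bornology

/-!
For fixed `u ∈ U`, the sequence `D u (z k) - ∑ i < k, γ i` is nonincreasing and bounded below by
`-∑ γ`, so `D u (z k)` is bounded and convergent. Boundedness together with (H3) gives the
boundedness of `z`. If a cluster point `a` lies in `U`, then (H5) along a subsequence shows that the
limit of `D a (z k)` is `0`. Let `b` be any other subsequential limit. With the midpoints
`w k = (a + z k) / 2`, which lie in the interior of `S`, (H6) gives
`D (w k) (z k) ≤ D a (z k) → 0`, whereas `w k → (a + b) / 2` along that subsequence; by (H7) this
forces `(a + b) / 2 = b`, that is `a = b`. Hence the bounded sequence `z` has `a` as its only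
subsequential limit, and it converges to `a`.
-/

/-- A nonnegative real sequence that is nonincreasing up to summable errors is
bounded above and convergent. -/
theorem quasi_decreasing_bound_and_limit (d γ : ℕ → ℝ) (hd : ∀ k, 0 ≤ d k) (hγ : ∀ k, 0 ≤ γ k)
    (hs : Summable γ) (h : ∀ k, d (k + 1) ≤ d k + γ k) :
    (∀ k, d k ≤ d 0 + ∑' i, γ i) ∧ ∃ l, Tendsto d atTop (nhds l) := by
  have hsum : ∀ k, ∑ i ∈ Finset.range k, γ i ≤ ∑' i, γ i := fun k =>
    hs.sum_le_tsum _ (fun i _ => hγ i)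
  have hanti : Antitone fun k => d k - ∑ i ∈ Finset.range k, γ i := by
    refine antitone_nat_of_succ_le fun k => ?_
    have := h k
    rw [Finset.sum_range_succ]
    linarith
  constructor
  · intro k
    have h0 := hanti (Nat.zero_le k)
    have h1 := hsum k
    simp only [Finset.range_zero, Finset.sum_empty] at h0
    linarith
  · have hbdd : BddBelow (Set.range fun k => d k - ∑ i ∈ Finset.range k, γ i) := by
      refine ⟨-∑' i, γ i, ?_⟩
      rintro _ ⟨k, rfl⟩
      have h1 := hsum k
      have h2 := hd k
      simp only
      linarith
    have hlim := (tendsto_atTop_ciInf hanti hbdd).add hs.hasSum.tendsto_sum_nat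
    simp only [sub_add_cancel] at hlim
    exact ⟨_, hlim⟩

/-- Lemma 5.4 (quasi-Fejér convergence): if `{zᵏ} ⊂ int S` is quasi-Fejér convergent to a
nonempty set `U ⊆ S` with respect to a proximal distance `D` satisfying (H3), (H5), (H6)
and (H7), then `{zᵏ}` is bounded, and if a cluster point of `{zᵏ}` belongs to `U`, the
whole sequence converges to it. -/
theorem lemma54_quasi_fejer (n : ℕ)
    (S : Set (EuclideanSpace ℝ (Fin n))) (hSne : S.Nonempty)
    (hScl : IsClosed S) (hSconv : Convex ℝ S)
    (D : EuclideanSpace ℝ (Fin n) → EuclideanSpace ℝ (Fin n) → ℝ)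
    (hDnonneg : ∀ x y, 0 ≤ D x y)
    -- (H3)
    (hH3 : ∀ x ∈ S, ∀ α : ℝ, IsBounded {y ∈ interior S | D x y ≤ α})
    -- (H5)
    (hH5 : ∀ (y : ℕ → EuclideanSpace ℝ (Fin n)) (b : EuclideanSpace ℝ (Fin n)),
      (∀ k, y k ∈ interior S) → b ∈ S → Tendsto y atTop (nhds b) →
      Tendsto (fun k => D b (y k)) atTop (nhds 0))
    -- (H6)
    (hH6 : ∀ z ∈ S, ∀ y ∈ interior S, ∀ α : ℝ, α ∈ Set.Ioo (0 : ℝ) 1 →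
      D z (α • z + (1 - α) • y) + D (α • z + (1 - α) • y) y ≤ D z y)
    -- (H7)
    (hH7 : ∀ (u v : ℕ → EuclideanSpace ℝ (Fin n)) (a b : EuclideanSpace ℝ (Fin n)),
      (∀ k, u k ∈ interior S) → (∀ k, v k ∈ interior S) →
      Tendsto u atTop (nhds a) → Tendsto v atTop (nhds b) → a ≠ b →
      ∃ c > 0, ∀ᶠ k in atTop, c ≤ D (u k) (v k))
    -- quasi-Fejér convergence of {zᵏ} ⊂ int S to U ⊆ S
    (U : Set (EuclideanSpace ℝ (Fin n))) (hUne : U.Nonempty) (hUS : U ⊆ S)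
    (z : ℕ → EuclideanSpace ℝ (Fin n)) (hz : ∀ k, z k ∈ interior S)
    (γseq : ℕ → ℝ) (hγnonneg : ∀ k, 0 ≤ γseq k) (hγsum : Summable γseq)
    (hfejer : ∀ u ∈ U, ∀ k, D u (z (k + 1)) ≤ D u (z k) + γseq k) :
    IsBounded (Set.range z) ∧
    ∀ a ∈ U, MapClusterPt a atTop z → Tendsto z atTop (nhds a) := by
  have key := fun u (hu : u ∈ U) => quasi_decreasing_bound_and_limit (fun k => D u (z k)) γseq
    (fun k => hDnonneg u (z k)) hγnonneg hγsum (hfejer u hu)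
  have hbd : IsBounded (Set.range z) := by
    obtain ⟨u, hu⟩ := hUne
    refine (hH3 u (hUS hu) (D u (z 0) + ∑' i, γseq i)).subset ?_
    rintro _ ⟨k, rfl⟩
    exact ⟨hz k, (key u hu).1 k⟩
  refine ⟨hbd, fun a ha hclus => ?_⟩
  have haS := hUS ha
  have hD0 : Tendsto (fun k => D a (z k)) atTop (nhds 0) := by
    obtain ⟨l, hl⟩ := (key a ha).2
    obtain ⟨φ, hφ, hφa⟩ := hclus.tendsto_subseq
    have h1 := hH5 (z ∘ φ) a (fun k => hz _) haS hφa
    have h2 := hl.comp hφ.tendsto_atTop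
    exact tendsto_nhds_unique h2 h1 ▸ hl
  refine tendsto_of_subseq_tendsto fun ns hns => ?_
  obtain ⟨b, -, φ, hφ, hφb⟩ := tendsto_subseq_of_bounded hbd
    (x := fun k => z (ns k)) (fun k => Set.mem_range_self _)
  refine ⟨φ, ?_⟩
  suffices hab : a = b by
    rw [hab]
    exact hφb
  by_contra hab
  set v : ℕ → EuclideanSpace ℝ (Fin n) := fun k => z (ns (φ k)) with hv
  have hvb : Tendsto v atTop (nhds b) := hφb
  set w : ℕ → EuclideanSpace ℝ (Fin n) :=
    fun k => (1 / 2 : ℝ) • a + (1 - 1 / 2 : ℝ) • v k with hw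
  have hwS : ∀ k, w k ∈ interior S := fun k =>
    hSconv.combo_self_interior_mem_interior haS (hz _) (by norm_num) (by norm_num) (by norm_num)
  have hwlim : Tendsto w atTop (nhds ((1 / 2 : ℝ) • a + (1 - 1 / 2 : ℝ) • b)) :=
    tendsto_const_nhds.add (hvb.const_smul _)
  have hne : (1 / 2 : ℝ) • a + (1 - 1 / 2 : ℝ) • b ≠ b := by
    intro h
    have h1 : (1 / 2 : ℝ) • (a - b) = 0 := by
      rw [← sub_eq_zero] at h
      rw [← h]
      module
    rcases smul_eq_zero.mp h1 with h2 | h2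
    · norm_num at h2
    · exact hab (sub_eq_zero.mp h2)
  obtain ⟨c, hc, hev⟩ := hH7 w v _ b hwS (fun k => hz _) hwlim hvb hne
  have hDv : Tendsto (fun k => D a (v k)) atTop (nhds 0) :=
    hD0.comp (hns.comp hφ.tendsto_atTop)
  obtain ⟨k, hk1, hk2⟩ := (hev.and (hDv.eventually (gt_mem_nhds hc))).exists
  have h6 := hH6 a haS (v k) (hz _) (1 / 2) (by norm_num)
  have h7 := hDnonneg a (w k)
  simp only [hw] at hk1 h7
  linarith
end

section
/- (Remark 5.1(b), finite termination.) Assume f satisfies (L4) (monotonicity) on K, ε_k, λ_k > 0, and ∇₁d(x,x) = 0 for x ∈ K. Suppose an iterate of the proximal algorithm satisfies x^{k+1} = xᵏ and xᵏ ∈ S(f,K), where x^{k+1} ∈ S(f_k,K). Then f(x^{k+1},y) = 0 for all y ∈ S(f,K) and h(x^{k+1},y) ≥ 0 for all y ∈ S(f,K); in particular x^{k+1} solves the bilevel equilibrium problem BEP. -/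
open scoped RealInnerProductSpace

/-- The solution set `S(ψ,K)` of the equilibrium problem for the bifunction `ψ` on `K`. -/
def eqSol (n : ℕ) (K : Set (EuclideanSpace ℝ (Fin n)))
    (ψ : EuclideanSpace ℝ (Fin n) → EuclideanSpace ℝ (Fin n) → ℝ) :
    Set (EuclideanSpace ℝ (Fin n)) :=
  {u | u ∈ K ∧ ∀ y ∈ K, 0 ≤ ψ u y}

/-- Remark 5.1(b) (finite termination): if an iterate of the proximal algorithm satisfies
`x^{k+1} = xᵏ` and `xᵏ ∈ S(f,K)`, then `f(x^{k+1},y) = 0` and `h(x^{k+1},y) ≥ 0` for all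
`y ∈ S(f,K)`; in particular `x^{k+1}` solves the bilevel equilibrium problem BEP. -/
theorem remark51_b_finite_termination (n : ℕ)
    (K : Set (EuclideanSpace ℝ (Fin n))) (hKne : K.Nonempty)
    (hKcl : IsClosed K) (hKconv : Convex ℝ K)
    (f h : EuclideanSpace ℝ (Fin n) → EuclideanSpace ℝ (Fin n) → ℝ)
    -- (L4) for f (monotonicity)
    (hfL4 : ∀ x ∈ K, ∀ y ∈ K, f x y + f y x ≤ 0)
    -- the regularizing distance data
    (d : EuclideanSpace ℝ (Fin n) → EuclideanSpace ℝ (Fin n) → ℝ)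
    (gd : EuclideanSpace ℝ (Fin n) → EuclideanSpace ℝ (Fin n) → EuclideanSpace ℝ (Fin n))
    (hgrad : ∀ x y : EuclideanSpace ℝ (Fin n), HasGradientAt (fun u => d u y) (gd x y) x)
    (hgd0 : ∀ x ∈ K, gd x x = 0)
    -- parameters
    (εk lamk : ℝ) (hεk : 0 < εk) (hlamk : 0 < lamk)
    -- the iterate: x^{k+1} = xᵏ, xᵏ ∈ S(f,K) and x^{k+1} ∈ S(f_k,K)
    (xk xk1 : EuclideanSpace ℝ (Fin n)) (heq : xk1 = xk)
    (hxkSol : xk ∈ eqSol n K f)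
    (hxk1K : xk1 ∈ K)
    (hiter : ∀ y ∈ K,
      0 ≤ εk * f xk1 y + h xk1 y + (1 / lamk) * ⟪gd xk1 xk, y - xk1⟫) :
    (∀ y ∈ eqSol n K f, f xk1 y = 0) ∧
    (∀ y ∈ eqSol n K f, 0 ≤ h xk1 y) ∧
    xk1 ∈ eqSol n K f := by
  subst heq
  -- both `f xk1 y` and `f y xk1` are nonnegative, while monotonicity bounds their sum by `0`
  have hf0 : ∀ y ∈ eqSol n K f, f xk1 y = 0 := fun y hy =>
    le_antisymm (by linarith [hfL4 xk1 hxk1K y hy.1, hy.2 xk1 hxk1K]) (hxkSol.2 y hy.1)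
  refine ⟨hf0, fun y hy => ?_, hxkSol⟩
  simpa [hf0 y hy, hgd0 xk1 hxk1K] using hiter y hy.1
end
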